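/- arXiv:1701.04977 — 3 statements merged into one kernel-verified Lean document; each statement's English description precedes it below -/
import Mathlib

section
/- The limit L := lim_{t→−∞} e^{−λt} f(t) exists in E; for every t ≤ 0 the Bochner integral ∫_{−∞}^{t} e^{λ(t−s)} ψ(s) ds converges absolutely, f(t) = e^{λt} L + ∫_{−∞}^{t} e^{λ(t−s)} ψ(s) ds, and ‖f(t) − e^{λt} L‖ ≤ C e^{γt}/(γ − Re λ). -/
open MeasureTheory Filter

/-- `E` is a complex Banach space, `λ ∈ ℂ`, `C ≥ 0`, `γ ∈ ℝ` with `Re λ < γ`, `ψ : ℝ → E`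
is continuous with `‖ψ(s)‖ ≤ C e^{γs}` for `s ≤ 0`, and `f : ℝ → E` is differentiable
with `f'(t) = λ f(t) + ψ(t)`.  Then the limit `L = lim_{t → −∞} e^{−λt} f(t)` exists,
and for every `t ≤ 0` the Bochner integral `∫_{−∞}^t e^{λ(t−s)} ψ(s) ds` converges
absolutely, `f(t) = e^{λt} L + ∫_{−∞}^t e^{λ(t−s)} ψ(s) ds`, and
`‖f(t) − e^{λt} L‖ ≤ C e^{γt}/(γ − Re λ)`. -/
theorem stmt_3 {E : Type*} [NormedAddCommGroup E] [NormedSpace ℂ E] [CompleteSpace E]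
    (lam : ℂ) (C γ : ℝ) (hC : 0 ≤ C) (hγ : lam.re < γ)
    (ψ : ℝ → E) (hψc : Continuous ψ) (hψ : ∀ s : ℝ, s ≤ 0 → ‖ψ s‖ ≤ C * Real.exp (γ * s))
    (f : ℝ → E) (hf : ∀ t : ℝ, HasDerivAt f (lam • f t + ψ t) t) :
    ∃ L : E, Tendsto (fun t : ℝ => Complex.exp (-(lam * t)) • f t) atBot (nhds L) ∧
      ∀ t : ℝ, t ≤ 0 →
        IntegrableOn (fun s : ℝ => Complex.exp (lam * (t - s)) • ψ s) (Set.Iic t) ∧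
        (f t = Complex.exp (lam * t) • L +
          ∫ s in Set.Iic t, Complex.exp (lam * (t - s)) • ψ s) ∧
        ‖f t - Complex.exp (lam * t) • L‖ ≤ C * Real.exp (γ * t) / (γ - lam.re) := by
  -- the integrand of the derivative of `e^{-λt} f(t)`
  have hg : ∀ t : ℝ, HasDerivAt (fun t : ℝ => Complex.exp (-(lam * t)) • f t)
      (Complex.exp (-(lam * t)) • ψ t) t := by
    intro t
    have h1 : HasDerivAt (fun t : ℝ => -(lam * (t : ℂ))) (-(lam * 1)) t :=
      ((Complex.ofRealCLM.hasDerivAt (x := t)).const_mul lam).neg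
    have h2 := h1.cexp.smul (hf t)
    refine HasDerivAt.congr_deriv (f := fun t : ℝ => Complex.exp (-(lam * t)) • f t) h2 ?_
    module
  have hb : ∀ s : ℝ, s ≤ 0 → ‖Complex.exp (-(lam * s)) • ψ s‖
      ≤ C * Real.exp ((γ - lam.re) * s) := by
    intro s hs
    rw [norm_smul, Complex.norm_exp]
    have h1 : (-(lam * (s : ℂ))).re = -(lam.re * s) := by simp
    rw [h1]
    calc Real.exp (-(lam.re * s)) * ‖ψ s‖
        ≤ Real.exp (-(lam.re * s)) * (C * Real.exp (γ * s)) := by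
          gcongr
          exact hψ s hs
      _ = C * (Real.exp (-(lam.re * s)) * Real.exp (γ * s)) := by ring
      _ = C * Real.exp ((γ - lam.re) * s) := by
          rw [← Real.exp_add]
          congr 2
          ring
  have hpos : 0 < γ - lam.re := sub_pos.2 hγ
  have hcont : Continuous (fun s : ℝ => Complex.exp (-(lam * s)) • ψ s) := by fun_prop
  have hdom : ∀ t : ℝ, IntegrableOn (fun s => C * Real.exp ((γ - lam.re) * s)) (Set.Iic t) :=
    fun t => (integrableOn_exp_mul_Iic hpos t).const_mul C
  have hint : ∀ t : ℝ, t ≤ 0 →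
      IntegrableOn (fun s : ℝ => Complex.exp (-(lam * s)) • ψ s) (Set.Iic t) := by
    intro t ht
    refine Integrable.mono' (hdom t) hcont.aestronglyMeasurable ?_
    refine (ae_restrict_iff' measurableSet_Iic).2 (Eventually.of_forall fun s hs => ?_)
    exact hb s (le_trans hs ht)
  have hlim := tendsto_limUnder_of_hasDerivAt_of_integrableOn_Iic
    (a := 0) (fun t _ => hg t) (hint 0 le_rfl)
  refine ⟨_, hlim, fun t ht => ?_⟩
  set L := limUnder atBot (fun t : ℝ => Complex.exp (-(lam * t)) • f t) with hL
  have hI := integral_Iic_of_hasDerivAt_of_tendsto' (a := t) (fun s _ => hg s) (hint t ht) hlim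
  have heq : (fun s : ℝ => Complex.exp (lam * (t - s)) • ψ s)
      = fun s : ℝ => Complex.exp (lam * t) • (Complex.exp (-(lam * s)) • ψ s) := by
    funext s
    rw [smul_smul, ← Complex.exp_add]
    congr 2
    ring
  have hft : Complex.exp (lam * t) • (Complex.exp (-(lam * t)) • f t) = f t := by
    rw [smul_smul, ← Complex.exp_add, add_neg_cancel, Complex.exp_zero, one_smul]
  have hdiff : f t - Complex.exp (lam * t) • L
      = Complex.exp (lam * t) • ∫ s in Set.Iic t, Complex.exp (-(lam * s)) • ψ s := by
    rw [hI, smul_sub, hft]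
  refine ⟨?_, ?_, ?_⟩
  · rw [heq]
    exact (hint t ht).smul (Complex.exp (lam * t))
  · rw [heq, integral_smul, ← hdiff]
    abel
  · rw [hdiff, norm_smul, Complex.norm_exp]
    have h1 : (lam * (t : ℂ)).re = lam.re * t := by simp
    rw [h1]
    have h2 : ‖∫ s in Set.Iic t, Complex.exp (-(lam * s)) • ψ s‖
        ≤ ∫ s in Set.Iic t, C * Real.exp ((γ - lam.re) * s) := by
      refine norm_integral_le_of_norm_le (hdom t) ?_
      refine (ae_restrict_iff' measurableSet_Iic).2 (Eventually.of_forall fun s hs => ?_)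
      exact hb s (le_trans hs ht)
    rw [integral_const_mul, integral_exp_mul_Iic hpos] at h2
    calc _ ≤ Real.exp (lam.re * t) * (C * (Real.exp ((γ - lam.re) * t) / (γ - lam.re))) := by
          gcongr
      _ = C * (Real.exp (lam.re * t) * Real.exp ((γ - lam.re) * t)) / (γ - lam.re) := by ring
      _ = C * Real.exp (γ * t) / (γ - lam.re) := by
          rw [← Real.exp_add]
          congr 3
          ring
end

section
/- For all real numbers s ≤ t, |K_m(t,s)| ≤ (t−s)^{m−1} e^{β(t−s)}. -/
open MeasureTheory intervalIntegral

/-- `m ≥ 1`, `λ_1, …, λ_m ∈ ℂ`, `β ∈ ℝ` with `Re λ_i ≤ β` for `1 ≤ i ≤ m`.  With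
`K_1(t,s) = e^{λ_1(t−s)}` and `K_j(t,s) = ∫_s^t e^{λ_j(t−r)} K_{j−1}(r,s) dr` for
`2 ≤ j ≤ m`, one has `|K_m(t,s)| ≤ (t−s)^{m−1} e^{β(t−s)}` for all `s ≤ t`. -/
theorem stmt_5 (m : ℕ) (hm : 1 ≤ m) (lam : ℕ → ℂ) (β : ℝ)
    (hβ : ∀ i : ℕ, 1 ≤ i → i ≤ m → (lam i).re ≤ β)
    (K : ℕ → ℝ → ℝ → ℂ)
    (hK1 : ∀ t s : ℝ, K 1 t s = Complex.exp (lam 1 * (t - s)))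
    (hKsucc : ∀ j : ℕ, 2 ≤ j → j ≤ m → ∀ t s : ℝ,
      K j t s = ∫ r in s..t, Complex.exp (lam j * (t - r)) * K (j - 1) r s) :
    ∀ s t : ℝ, s ≤ t → ‖K m t s‖ ≤ (t - s) ^ (m - 1) * Real.exp (β * (t - s)) := by
  have key : ∀ n : ℕ, n + 1 ≤ m → ∀ s t : ℝ, s ≤ t →
      ‖K (n + 1) t s‖ ≤ (t - s) ^ n * Real.exp (β * (t - s)) := by
    have hexp : ∀ i : ℕ, 1 ≤ i → i ≤ m → ∀ r t : ℝ, r ≤ t →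
        ‖Complex.exp (lam i * (t - r))‖ ≤ Real.exp (β * (t - r)) := by
      intro i h1 h2 r t hrt
      rw [Complex.norm_exp, Real.exp_le_exp]
      have : (lam i * ((t : ℂ) - r)).re = (lam i).re * (t - r) := by
        simp [Complex.mul_re]
      rw [this]
      exact mul_le_mul_of_nonneg_right (hβ i h1 h2) (by linarith)
    intro n
    induction n with
    | zero =>
      intro h s t hst
      rw [zero_add, hK1, pow_zero, one_mul]
      exact hexp 1 le_rfl hm s t hst
    | succ n ih =>
      intro h s t hst
      rw [hKsucc (n + 1 + 1) (by omega) h]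
      have hb := intervalIntegral.norm_integral_le_of_norm_le_const
        (a := s) (b := t) (C := (t - s) ^ n * Real.exp (β * (t - s)))
        (f := fun r : ℝ => Complex.exp (lam (n + 1 + 1) * (t - r)) * K (n + 1 + 1 - 1) r s) (by
          intro r hr
          rw [Set.uIoc_of_le hst] at hr
          rw [norm_mul]
          have h1 := hexp (n + 1 + 1) (by omega) h r t hr.2
          have h2 := ih (by omega) s r hr.1.le
          have h3 : (r - s) ^ n ≤ (t - s) ^ n :=
            pow_le_pow_left₀ (by linarith [hr.1]) (by linarith [hr.2]) n
          calc _ ≤ Real.exp (β * (t - r)) * ((r - s) ^ n * Real.exp (β * (r - s))) :=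
                mul_le_mul h1 h2 (norm_nonneg _) (Real.exp_pos _).le
            _ = (r - s) ^ n * Real.exp (β * (t - s)) := by
                rw [show β * (t - s) = β * (t - r) + β * (r - s) by ring, Real.exp_add]
                ring
            _ ≤ _ := mul_le_mul_of_nonneg_right h3 (Real.exp_pos _).le)
      rw [abs_of_nonneg (by linarith)] at hb
      refine hb.trans (le_of_eq ?_)
      ring
  obtain ⟨n, rfl⟩ : ∃ n, m = n + 1 := ⟨m - 1, by omega⟩
  exact key n le_rfl
end

section
/- For every 0 ≤ i ≤ k and all t, s ≤ 0, |Φ_i(t,s)| ≤ |t|^i |s|^{m−1} e^{β(t−s)} e^{−Re(ν_i)t}. -/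
open MeasureTheory intervalIntegral

/-- `m ≥ 1`, `β ∈ ℝ`, `k ≥ 0`, `ν_0 = 0` and `Re ν_j ≥ β` for `1 ≤ j ≤ k`;
`Φ_0` is measurable with `Φ_0(t,s) = 0` for `s > t` and
`|Φ_0(t,s)| ≤ (t−s)^{m−1} e^{β(t−s)}` for `s ≤ t ≤ 0`; for `0 ≤ i < k`,
`Φ_{i+1}(t,s) = −∫_t^0 e^{(ν_i − ν_{i+1})r} Φ_i(r,s) dr`.  Then for every `0 ≤ i ≤ k`
and all `t, s ≤ 0`, `|Φ_i(t,s)| ≤ |t|^i |s|^{m−1} e^{β(t−s)} e^{−Re(ν_i) t}`. -/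
theorem stmt_11 (m : ℕ) (hm : 1 ≤ m) (β : ℝ) (k : ℕ)
    (ν : ℕ → ℂ) (hν0 : ν 0 = 0)
    (hν : ∀ j : ℕ, 1 ≤ j → j ≤ k → β ≤ (ν j).re)
    (Φ : ℕ → ℝ → ℝ → ℂ)
    (hΦ0meas : Measurable (fun q : ℝ × ℝ => Φ 0 q.1 q.2))
    (hΦ0zero : ∀ t s : ℝ, t ≤ 0 → s ≤ 0 → t < s → Φ 0 t s = 0)
    (hΦ0bd : ∀ t s : ℝ, s ≤ t → t ≤ 0 →
      ‖Φ 0 t s‖ ≤ (t - s) ^ (m - 1) * Real.exp (β * (t - s)))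
    (hΦsucc : ∀ i : ℕ, i < k → ∀ t s : ℝ, t ≤ 0 → s ≤ 0 →
      Φ (i + 1) t s = -∫ r in t..(0 : ℝ), Complex.exp ((ν i - ν (i + 1)) * r) * Φ i r s) :
    ∀ i : ℕ, i ≤ k → ∀ t s : ℝ, t ≤ 0 → s ≤ 0 →
      ‖Φ i t s‖ ≤ |t| ^ i * |s| ^ (m - 1) * Real.exp (β * (t - s)) *
        Real.exp (-(ν i).re * t) := by
  intro i
  induction i with
  | zero =>
    intro _ t s ht hs
    rw [hν0]
    simp only [pow_zero, one_mul, Complex.zero_re, neg_zero, zero_mul, Real.exp_zero, mul_one]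
    rcases lt_or_ge t s with h | h
    · rw [hΦ0zero t s ht hs h, norm_zero]
      positivity
    · refine (hΦ0bd t s h ht).trans ?_
      have h1 : t - s ≤ |s| := by rw [abs_of_nonpos hs]; linarith
      have h2 : 0 ≤ t - s := by linarith
      gcongr
  | succ i ih =>
    intro hi t s ht hs
    rw [hΦsucc i (by omega) t s ht hs, norm_neg]
    have key : ∀ r ∈ Set.uIoc t 0, ‖Complex.exp ((ν i - ν (i + 1)) * r) * Φ i r s‖ ≤
        |t| ^ i * |s| ^ (m - 1) * Real.exp (β * (t - s)) * Real.exp (-(ν (i + 1)).re * t) := by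
      intro r hr
      rw [Set.uIoc_of_le ht] at hr
      have hb := hν (i + 1) (by omega) hi
      have h1 := ih (by omega) r s hr.2 hs
      have h2 : |r| ≤ |t| := by
        rw [abs_of_nonpos hr.2, abs_of_nonpos ht]; linarith [hr.1]
      rw [norm_mul, Complex.norm_exp]
      have h3 : ((ν i - ν (i + 1)) * (r : ℂ)).re = ((ν i).re - (ν (i + 1)).re) * r := by
        simp
      rw [h3]
      calc Real.exp (((ν i).re - (ν (i + 1)).re) * r) * ‖Φ i r s‖
          ≤ Real.exp (((ν i).re - (ν (i + 1)).re) * r) *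
            (|r| ^ i * |s| ^ (m - 1) * Real.exp (β * (r - s)) * Real.exp (-(ν i).re * r)) := by
            gcongr
        _ = |r| ^ i * |s| ^ (m - 1) * Real.exp ((β - (ν (i + 1)).re) * r - β * s) := by
            have : (β - (ν (i + 1)).re) * r - β * s =
              ((ν i).re - (ν (i + 1)).re) * r + β * (r - s) + -(ν i).re * r := by ring
            rw [this, Real.exp_add, Real.exp_add]; ring
        _ ≤ |t| ^ i * |s| ^ (m - 1) * Real.exp ((β - (ν (i + 1)).re) * t - β * s) := by
            have : (β - (ν (i + 1)).re) * r ≤ (β - (ν (i + 1)).re) * t := by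
              nlinarith [hr.1]
            gcongr
        _ = _ := by
            rw [mul_assoc (|t| ^ i * |s| ^ (m - 1)), ← Real.exp_add]
            congr 2; ring
    refine (intervalIntegral.norm_integral_le_of_norm_le_const key).trans (le_of_eq ?_)
    rw [zero_sub, abs_neg, pow_succ]
    ring
end
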